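/- Let L be a countable linear order and α an ordinal such that for every x ∈ L, the initial segment L_{<x} = {z ∈ L : z < x} has Scott rank strictly less than α. Then SR(L) ≤ α + 4. -/

import Mathlib

/-- The standard back-and-forth relation between tuples in linear orders, defined by
transfinite recursion: `bfT 0` holds iff the tuples satisfy the same atomic formulas;
`bfT ξ L M a b` iff the tuples satisfy the same atomic formulas and for every `γ < ξ`
and every tuple `d` in `M` there is a tuple `c` in `L` with `bfT γ M L (b ++ d) (a ++ c)`. -/
def bfT (ξ : Ordinal) (L : Type) [LinearOrder L] (M : Type) [LinearOrder M]
    {k : ℕ} (a : Fin k → L) (b : Fin k → M) : Prop :=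
  (∀ i j, a i ≤ a j ↔ b i ≤ b j) ∧
  ∀ γ < ξ, ∀ (l : ℕ) (d : Fin l → M), ∃ c : Fin l → L,
    bfT γ M L (Fin.append b d) (Fin.append a c)
termination_by ξ

/-- `rk L a` is the least ordinal `α` such that every tuple `b` with
`(L, a) ≤_α (L, b)` is automorphic to `a`. -/
noncomputable def rk (L : Type) [LinearOrder L] {k : ℕ} (a : Fin k → L) : Ordinal :=
  sInf {α | ∀ b : Fin k → L, bfT α L L a b → ∃ f : L ≃o L, ∀ i, f (a i) = b i}

/-- The Scott rank of a linear order: the least ordinal strictly greater than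
`rk L a` for every finite tuple `a` in `L`. -/
noncomputable def scottRank (L : Type) [LinearOrder L] : Ordinal :=
  sInf {α | ∀ (k : ℕ) (a : Fin k → L), rk L a < α}

universe u

theorem bf_mono {ξ ξ' : Ordinal} (hξ : ξ' ≤ ξ) {L M : Type} [LinearOrder L] [LinearOrder M]
    {k : ℕ} {a : Fin k → L} {b : Fin k → M} (h : bfT ξ L M a b) : bfT ξ' L M a b := by
  rw [bfT] at h ⊢
  exact ⟨h.1, fun γ hγ => h.2 γ (lt_of_lt_of_le hγ hξ)⟩

theorem bf_atom {ξ : Ordinal} {L M : Type} [LinearOrder L] [LinearOrder M]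
    {k : ℕ} {a : Fin k → L} {b : Fin k → M} (h : bfT ξ L M a b) :
    ∀ i j, a i ≤ a j ↔ b i ≤ b j := by
  rw [bfT] at h
  exact h.1

theorem bf_ext {ξ γ : Ordinal} (hγ : γ < ξ) {L M : Type} [LinearOrder L] [LinearOrder M]
    {k : ℕ} {a : Fin k → L} {b : Fin k → M} (h : bfT ξ L M a b) {l : ℕ} (d : Fin l → M) :
    ∃ c : Fin l → L, bfT γ M L (Fin.append b d) (Fin.append a c) := by
  rw [bfT] at h
  exact h.2 γ hγ l d

/-- restriction to initial segments and reindexing, in one abstract statement -/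
theorem bf_restrict (ξ : Ordinal) : ∀ {L M L' M' : Type} [LinearOrder L] [LinearOrder M]
    [LinearOrder L'] [LinearOrder M'] (i : L' ↪o L) (j : M' ↪o M)
    {n k : ℕ} (a : Fin n → L) (b : Fin n → M)
    (_hL : ∀ (N : ℕ) (e : Fin n → Fin N) (A : Fin N → L) (B : Fin N → M), A ∘ e = a → B ∘ e = b →
      (∀ s t, A s ≤ A t ↔ B s ≤ B t) → ∀ s, A s ∈ Set.range i ↔ B s ∈ Set.range j)
    (e : Fin k → Fin n) (p : Fin k → L') (q : Fin k → M')
    (_hp : ∀ s, i (p s) = a (e s)) (_hq : ∀ s, j (q s) = b (e s)),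
    bfT ξ L M a b → bfT ξ L' M' p q := by
  induction ξ using WellFoundedLT.induction with
  | ind ξ ih =>
  intro L M L' M' _ _ _ _ i j n k a b hL e p q hp hq h
  rw [bfT]
  refine ⟨fun s t => ?_, fun γ hγ l d => ?_⟩
  · rw [← i.le_iff_le, ← j.le_iff_le, hp, hp, hq, hq]
    exact bf_atom h _ _
  · obtain ⟨c, hc⟩ := bf_ext hγ h (fun s => j (d s))
    have hat := bf_atom hc
    have hcr : ∀ s, c s ∈ Set.range i := by
      intro s
      have := (hL (n + l) (Fin.castAdd l) (Fin.append a c) (Fin.append b (fun s => j (d s)))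
        (by ext s; simp) (by ext s; simp) (fun s t => (hat s t).symm) (Fin.natAdd n s)).2
      simpa using this
    choose c' hc' using hcr
    refine ⟨c', ?_⟩
    refine ih γ hγ j i (Fin.append b (fun s => j (d s))) (Fin.append a c) ?_
      (Fin.append (fun s => Fin.castAdd l (e s)) (fun s => Fin.natAdd n s)) _ _ ?_ ?_ hc
    · intro N e' A B hA hB hAB s
      refine (hL N (fun s => e' (Fin.castAdd l s)) B A ?_ ?_ (fun s t => (hAB s t).symm) s).symm
      · ext s; have := congrFun hB (Fin.castAdd l s); simpa using this
      · ext s; have := congrFun hA (Fin.castAdd l s); simpa using this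
    · intro s
      refine Fin.addCases (fun s => ?_) (fun s => ?_) s <;> simp [hq]
    · intro s
      refine Fin.addCases (fun s => ?_) (fun s => ?_) s <;> simp [hp, hc']

theorem bf_reindex {ξ : Ordinal} {L M : Type} [LinearOrder L] [LinearOrder M]
    {n k : ℕ} {a : Fin n → L} {b : Fin n → M} (h : bfT ξ L M a b) (e : Fin k → Fin n)
    {p : Fin k → L} {q : Fin k → M} (hp : ∀ s, p s = a (e s)) (hq : ∀ s, q s = b (e s)) :
    bfT ξ L M p q := by
  refine bf_restrict ξ (RelEmbedding.refl _) (RelEmbedding.refl _) a b ?_ e p q hp hq h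
  intros; simp

theorem bf_iso {ξ : Ordinal} {L M L' M' : Type} [LinearOrder L] [LinearOrder M]
    [LinearOrder L'] [LinearOrder M'] (i : L' ≃o L) (j : M' ≃o M)
    {n : ℕ} {a : Fin n → L'} {b : Fin n → M'}
    (h : bfT ξ L M (fun s => i (a s)) (fun s => j (b s))) : bfT ξ L' M' a b := by
  refine bf_restrict ξ i.toOrderEmbedding j.toOrderEmbedding _ _ ?_ id a b
    (fun _ => rfl) (fun _ => rfl) h
  intros
  simp [i.surjective.range_eq, j.surjective.range_eq]

theorem bf_symm {ξ γ : Ordinal} (hγ : γ < ξ) {L M : Type} [LinearOrder L] [LinearOrder M]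
    {k : ℕ} {a : Fin k → L} {b : Fin k → M} (h : bfT ξ L M a b) : bfT γ M L b a := by
  obtain ⟨c, hc⟩ := bf_ext hγ h (Fin.elim0 : Fin 0 → M)
  exact bf_reindex hc (Fin.castAdd 0) (fun s => (Fin.append_left _ _ s).symm)
    (fun s => (Fin.append_left _ _ s).symm)

theorem bf_trans (ξ : Ordinal) : ∀ {L M N : Type} [LinearOrder L] [LinearOrder M] [LinearOrder N]
    {k : ℕ} (a : Fin k → L) (b : Fin k → M) (c : Fin k → N),
    bfT ξ L M a b → bfT ξ M N b c → bfT ξ L N a c := by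
  induction ξ using WellFoundedLT.induction with
  | ind ξ ih =>
  intro L M N _ _ _ k a b c h1 h2
  rw [bfT]
  refine ⟨fun s t => (bf_atom h1 s t).trans (bf_atom h2 s t), fun γ hγ l d => ?_⟩
  obtain ⟨d', hd'⟩ := bf_ext hγ h2 d
  obtain ⟨_, hdd⟩ := bf_ext hγ h1 d'
  exact ⟨_, ih γ hγ _ _ _ hd' hdd⟩

/-- Abstract back-and-forth for countable orders. -/
theorem back_forth {M N : Type} [LinearOrder M] [LinearOrder N] [Countable M] [Countable N]
    (G : Set (Set (M × N)))
    (hG : ∀ R ∈ G, ∀ u ∈ R, ∀ v ∈ R, u.1 ≤ v.1 ↔ u.2 ≤ v.2)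
    (hf : ∀ R ∈ G, ∀ c : M, ∃ R' ∈ G, R ⊆ R' ∧ ∃ d, (c, d) ∈ R')
    (hb : ∀ R ∈ G, ∀ d : N, ∃ R' ∈ G, R ⊆ R' ∧ ∃ c, (c, d) ∈ R')
    (R0 : Set (M × N)) (h0 : R0 ∈ G) :
    ∃ f : M ≃o N, ∀ u ∈ R0, f u.1 = u.2 := by
  classical
  have := Encodable.ofCountable M
  have := Encodable.ofCountable N
  let D : M ⊕ N → Order.Cofinal (↥G) := fun z => Sum.casesOn z
    (fun c => ⟨{R | ∃ d, (c, d) ∈ R.1}, fun R => by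
      obtain ⟨R', h1, h2, h3⟩ := hf R.1 R.2 c
      exact ⟨⟨R', h1⟩, h3, h2⟩⟩)
    (fun d => ⟨{R | ∃ c, (c, d) ∈ R.1}, fun R => by
      obtain ⟨R', h1, h2, h3⟩ := hb R.1 R.2 d
      exact ⟨⟨R', h1⟩, h3, h2⟩⟩)
  let I := Order.idealOfCofinals (⟨R0, h0⟩ : ↥G) D
  have h0I : (⟨R0, h0⟩ : ↥G) ∈ I := Order.mem_idealOfCofinals _ D
  have hM : ∀ c : M, ∃ d, ∃ R ∈ I, (c, d) ∈ R.1 := by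
    intro c
    obtain ⟨R, h1, h2⟩ := Order.cofinal_meets_idealOfCofinals (⟨R0, h0⟩ : ↥G) D (Sum.inl c)
    obtain ⟨d, hd⟩ := h1
    exact ⟨d, R, h2, hd⟩
  have hN : ∀ d : N, ∃ c, ∃ R ∈ I, (c, d) ∈ R.1 := by
    intro d
    obtain ⟨R, h1, h2⟩ := Order.cofinal_meets_idealOfCofinals (⟨R0, h0⟩ : ↥G) D (Sum.inr d)
    obtain ⟨c, hd⟩ := h1
    exact ⟨c, R, h2, hd⟩
  have key : ∀ u v : M × N, (∃ R ∈ I, u ∈ R.1) → (∃ R ∈ I, v ∈ R.1) →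
      (u.1 ≤ v.1 ↔ u.2 ≤ v.2) := by
    rintro u v ⟨R, hR, hu⟩ ⟨S, hS, hv⟩
    obtain ⟨T, hT, h1, h2⟩ := I.directed R hR S hS
    exact hG T.1 T.2 u (h1 hu) v (h2 hv)
  choose f hf' using hM
  choose g hg' using hN
  have uniq : ∀ u v : M × N, (∃ R ∈ I, u ∈ R.1) → (∃ R ∈ I, v ∈ R.1) →
      (u.1 = v.1 ↔ u.2 = v.2) := by
    intro u v hu hv
    rw [le_antisymm_iff, le_antisymm_iff, key u v hu hv, key v u hv hu]
  refine ⟨⟨⟨f, g, fun c => ?_, fun d => ?_⟩, ?_⟩, ?_⟩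
  · exact (uniq (g (f c), f c) (c, f c) (hg' _) (hf' _)).2 rfl
  · exact (uniq (g d, f (g d)) (g d, d) (hf' _) (hg' _)).1 rfl
  · intro c c'
    exact (key (c, f c) (c', f c') (hf' _) (hf' _)).symm
  · intro u hu
    exact (uniq (u.1, f u.1) u (hf' _) ⟨_, h0I, hu⟩).1 rfl

/-- tuple version -/
theorem back_forth_tuple {M N : Type} [LinearOrder M] [LinearOrder N] [Countable M] [Countable N]
    (Q : ∀ n : ℕ, (Fin n → M) → (Fin n → N) → Prop)
    (hQ : ∀ n p q, Q n p q → ∀ i j, p i ≤ p j ↔ q i ≤ q j)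
    (hf : ∀ n p q, Q n p q → ∀ c : M, ∃ d : N,
      Q (n + 1) (Fin.append p (fun _ : Fin 1 => c)) (Fin.append q (fun _ : Fin 1 => d)))
    (hb : ∀ n p q, Q n p q → ∀ d : N, ∃ c : M,
      Q (n + 1) (Fin.append p (fun _ : Fin 1 => c)) (Fin.append q (fun _ : Fin 1 => d)))
    {k : ℕ} (a : Fin k → M) (b : Fin k → N) (h : Q k a b) :
    ∃ f : M ≃o N, ∀ i, f (a i) = b i := by
  have sub : ∀ (n : ℕ) (p : Fin n → M) (q : Fin n → N) (c : M) (d : N),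
      Set.range (fun i => (p i, q i)) ⊆ Set.range (fun i => (Fin.append p (fun _ : Fin 1 => c) i,
        Fin.append q (fun _ : Fin 1 => d) i)) := by
    rintro n p q c d _ ⟨i, rfl⟩
    exact ⟨Fin.castAdd 1 i, by simp⟩
  have mem : ∀ (n : ℕ) (p : Fin n → M) (q : Fin n → N) (c : M) (d : N),
      (c, d) ∈ Set.range (fun i => (Fin.append p (fun _ : Fin 1 => c) i,
        Fin.append q (fun _ : Fin 1 => d) i)) := by
    intro n p q c d
    exact ⟨Fin.natAdd n 0, by simp only [Fin.append_right]⟩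
  obtain ⟨f, hf⟩ := back_forth
    {R : Set (M × N) | ∃ n p q, Q n p q ∧ R = Set.range (fun i => (p i, q i))}
    (by
      rintro R ⟨n, p, q, h, rfl⟩ _ ⟨i, rfl⟩ _ ⟨j, rfl⟩
      exact hQ n p q h i j)
    (by
      rintro R ⟨n, p, q, h, rfl⟩ c
      obtain ⟨d, hd⟩ := hf n p q h c
      exact ⟨_, ⟨_, _, _, hd, rfl⟩, sub _ _ _ _ _, d, mem _ _ _ _ _⟩)
    (by
      rintro R ⟨n, p, q, h, rfl⟩ d
      obtain ⟨c, hd⟩ := hb n p q h d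
      exact ⟨_, ⟨_, _, _, hd, rfl⟩, sub _ _ _ _ _, c, mem _ _ _ _ _⟩)
    (Set.range (fun i => (a i, b i))) ⟨k, a, b, h, rfl⟩
  exact ⟨f, fun i => hf _ ⟨i, rfl⟩⟩

theorem fin1_eta {X : Type} (c : Fin 1 → X) : c = fun _ => c 0 := by
  ext i; rw [Subsingleton.elim i 0]

theorem exists_stable (M : Type) [LinearOrder M] [Countable M] :
    ∃ β : Ordinal.{u}, ∀ (n : ℕ) (p q : Fin n → M), bfT β M M p q → ∀ γ : Ordinal.{u}, bfT γ M M p q := by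
  classical
  let ι := Σ n : ℕ, (Fin n → M) × (Fin n → M)
  let f : ι → Ordinal.{u} := fun z =>
    if h : ∃ γ : Ordinal.{u}, ¬ bfT γ M M z.2.1 z.2.2 then h.choose else 0
  refine ⟨⨆ z, f z, fun n p q h γ => ?_⟩
  by_contra hγ
  have hex : ∃ γ : Ordinal.{u}, ¬ bfT γ M M p q := ⟨γ, hγ⟩
  have hle : f ⟨n, p, q⟩ ≤ ⨆ z, f z := Ordinal.le_iSup f _
  have : ¬ bfT (f ⟨n, p, q⟩) M M p q := by
    have : f ⟨n, p, q⟩ = hex.choose := dif_pos hex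
    rw [this]; exact hex.choose_spec
  exact this (bf_mono hle h)

theorem rk_spec (M : Type) [LinearOrder M] [Countable M] {k : ℕ} (a b : Fin k → M)
    (h : bfT (rk M a) M M a b) : ∃ f : M ≃o M, ∀ i, f (a i) = b i := by
  have hne : {α : Ordinal | ∀ b : Fin k → M, bfT α M M a b →
      ∃ f : M ≃o M, ∀ i, f (a i) = b i}.Nonempty := by
    obtain ⟨β, hβ⟩ := exists_stable M
    refine ⟨β, fun b hb => ?_⟩
    refine back_forth_tuple (fun n p q => ∀ γ : Ordinal, bfT γ M M p q)
      (fun n p q h => bf_atom (h 0)) ?_ ?_ a b (hβ _ _ _ hb)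
    · intro n p q h c
      obtain ⟨d, hd⟩ := bf_ext (Order.lt_succ β)
        (bf_symm (Order.lt_succ _) (h (Order.succ (Order.succ β)))) (fun _ : Fin 1 => c)
      rw [fin1_eta d] at hd
      exact ⟨d 0, hβ _ _ _ hd⟩
    · intro n p q h d
      obtain ⟨c, hc⟩ := bf_ext (Order.lt_succ (Order.succ β)) (h _) (fun _ : Fin 1 => d)
      rw [fin1_eta c] at hc
      exact ⟨c 0, hβ _ _ _ (bf_symm (Order.lt_succ _) hc)⟩
  exact csInf_mem hne b h

theorem rk_lt (M : Type) [LinearOrder M] [Countable M] {k : ℕ} (a : Fin k → M) :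
    rk.{u} M a < scottRank.{u} M := by
  have hne : {α : Ordinal.{u} | ∀ (k : ℕ) (a : Fin k → M), rk M a < α}.Nonempty := by
    let ι := Σ n : ℕ, (Fin n → M)
    let f : ι → Ordinal.{u} := fun z => rk M z.2
    refine ⟨Order.succ (⨆ z, f z), fun k a => Order.lt_succ_iff.2 ?_⟩
    exact Ordinal.le_iSup f ⟨k, a⟩
  exact csInf_mem hne k a

theorem iso_of_bf {M N : Type} [LinearOrder M] [LinearOrder N] [Countable M] [Countable N]
    {α : Ordinal} (hα : scottRank M < α) {k : ℕ} (a : Fin k → M) (b : Fin k → N)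
    (h : bfT α M N a b) : ∃ f : M ≃o N, ∀ i, f (a i) = b i := by
  set β := scottRank M with hβ
  have glob : ∀ {n : ℕ} (q : Fin n → N), ∃ p : Fin n → M, bfT β N M q p := by
    intro n q
    obtain ⟨p, hp⟩ := bf_ext hα h q
    exact ⟨p, bf_reindex hp (Fin.natAdd k) (by simp) (by simp)⟩
  refine back_forth_tuple (fun n p q => bfT β N M q p)
    (fun n p q h i j => (bf_atom h i j).symm) ?_ ?_ a b (bf_symm hα h)
  · intro n p q h c
    obtain ⟨d, hd⟩ := bf_ext (rk_lt M (Fin.append p (fun _ : Fin 1 => c))) h (fun _ : Fin 1 => c)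
    rw [fin1_eta d] at hd
    refine ⟨d 0, ?_⟩
    obtain ⟨p', hp'⟩ := glob (Fin.append q (fun _ : Fin 1 => d 0))
    obtain ⟨f, hf⟩ := rk_spec M _ p' (bf_trans _ _ _ _ hd (bf_mono (rk_lt M _).le hp'))
    refine bf_iso (OrderIso.refl N) f ?_
    have : (fun s => f (Fin.append p (fun _ : Fin 1 => c) s)) = p' := funext hf
    rw [this]; exact hp'
  · intro n p q h d
    obtain ⟨p', hp'⟩ := glob (Fin.append q (fun _ : Fin 1 => d))
    have h1 : bfT β N M q (fun s => p' (Fin.castAdd 1 s)) :=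
      bf_reindex hp' (Fin.castAdd 1) (by simp) (by simp)
    obtain ⟨f, hf⟩ := rk_spec M p _
      (bf_trans _ _ _ _ (bf_symm (rk_lt M p) h) (bf_mono (rk_lt M _).le h1))
    refine ⟨f.symm (p' (Fin.natAdd n 0)), ?_⟩
    refine bf_iso (OrderIso.refl N) f ?_
    have : (fun s => f (Fin.append p (fun _ : Fin 1 => f.symm (p' (Fin.natAdd n 0))) s)) = p' := by
      ext s
      refine Fin.addCases (fun s => ?_) (fun s => ?_) s
      · simp [hf]
      · rw [Subsingleton.elim s 0]; simp only [Fin.append_right, OrderIso.apply_symm_apply]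
    exact (congrArg (fun r => bfT β N M (Fin.append q (fun _ : Fin 1 => d)) r) this).mpr (hp')

/-- An isomorphism of the closed initial segments below `x` and `y` taking `a` to `b` -/
def SegIso {L : Type} [LinearOrder L] {k : ℕ} (a : Fin k → L) (x : L) (b : Fin k → L) (y : L) :
    Prop :=
  (∀ i, a i ≤ x) ∧ ∃ f : L → L, StrictMonoOn f (Set.Iic x) ∧ f '' Set.Iic x = Set.Iic y ∧
    ∀ i, f (a i) = b i

section seg
variable {L : Type} [LinearOrder L] {k : ℕ} {a b c : Fin k → L} {x y z : L}

theorem SegIso.right (h : SegIso a x b y) : ∀ i, b i ≤ y := by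
  obtain ⟨h0, f, h1, h2, h3⟩ := h
  intro i
  have : f (a i) ∈ Set.Iic y := h2 ▸ ⟨a i, h0 i, rfl⟩
  rw [h3] at this; exact this

theorem SegIso.refl (h : ∀ i, a i ≤ x) : SegIso a x a x :=
  ⟨h, id, strictMonoOn_id, by simp, fun _ => rfl⟩

theorem SegIso.trans (h : SegIso a x b y) (h' : SegIso b y c z) : SegIso a x c z := by
  obtain ⟨h0, f, h1, h2, h3⟩ := h
  obtain ⟨h0', f', h1', h2', h3'⟩ := h'
  refine ⟨h0, f' ∘ f, ?_, ?_, fun i => by simp [h3, h3']⟩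
  · refine h1'.comp h1 ?_
    intro v hv
    exact h2 ▸ ⟨v, hv, rfl⟩
  · rw [Set.image_comp, h2, h2']

theorem SegIso.symm (h : SegIso a x b y) : SegIso b y a x := by
  have hr := h.right
  obtain ⟨h0, f, h1, h2, h3⟩ := h
  have : ∀ w : L, ∃ v, w ≤ y → v ≤ x ∧ f v = w := by
    intro w
    by_cases hw : w ≤ y
    · have : w ∈ f '' Set.Iic x := h2 ▸ hw
      obtain ⟨v, hv, hvw⟩ := this
      exact ⟨v, fun _ => ⟨hv, hvw⟩⟩
    · exact ⟨w, fun h => absurd h hw⟩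
  choose g hg using this
  have hfy : ∀ v ≤ x, f v ≤ y := fun v hv => by
    have : f v ∈ Set.Iic y := h2 ▸ ⟨v, hv, rfl⟩
    exact this
  have hgf : ∀ v ≤ x, g (f v) = v := fun v hv =>
    h1.injOn (hg _ (hfy v hv)).1 hv (hg _ (hfy v hv)).2
  refine ⟨hr, g, ?_, ?_, fun i => ?_⟩
  · intro v hv w hw hvw
    rw [← h1.lt_iff_lt (hg v hv).1 (hg w hw).1, (hg v hv).2, (hg w hw).2]
    exact hvw
  · ext v
    constructor
    · rintro ⟨w, hw, rfl⟩
      exact (hg w hw).1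
    · intro hv
      exact ⟨f v, hfy v hv, hgf v hv⟩
  · rw [← h3, hgf _ (h0 i)]

theorem seg_restrict {f : L → L} (h1 : StrictMonoOn f (Set.Iic x))
    (h2 : f '' Set.Iic x = Set.Iic y) (h3 : ∀ i, f (a i) = b i) {v : L} (hv : v ≤ x)
    (hav : ∀ i, a i ≤ v) : SegIso a v b (f v) := by
  refine ⟨hav, f, h1.mono (Set.Iic_subset_Iic.2 hv), ?_, h3⟩
  have hfv : f v ≤ y := by
    have : f v ∈ Set.Iic y := h2 ▸ ⟨v, hv, rfl⟩
    exact this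
  ext w
  constructor
  · rintro ⟨t, ht, rfl⟩
    exact (h1.le_iff_le (le_trans ht hv) hv).2 ht
  · intro hw
    have : w ∈ f '' Set.Iic x := h2 ▸ (le_trans hw hfv)
    obtain ⟨t, ht, rfl⟩ := this
    exact ⟨t, (h1.le_iff_le ht hv).1 hw, rfl⟩

end seg

/-- back-and-forth equivalence gives isomorphisms of closed initial segments -/
theorem seg_of_bf {L : Type} [LinearOrder L] [Countable L] {α : Ordinal.{u}}
    (hα : ∀ x : L, scottRank.{u} ↥(Set.Iio x) < α) {n k : ℕ} (A B : Fin n → L)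
    (h : bfT α L L A B) (e : Fin k → Fin n) (t : Fin n) (hle : ∀ i, A (e i) ≤ A t) :
    SegIso (A ∘ e) (A t) (B ∘ e) (B t) := by
  classical
  have hat := bf_atom h
  let I := {i : Fin n // A i < A t}
  let E := Fintype.equivFin I
  have hlt : ∀ i, A i < A t ↔ B i < B t := fun i => by
    rw [← not_le, ← not_le, hat]
  let p : Fin (Fintype.card I) → Set.Iio (A t) := fun s => ⟨A (E.symm s).1, (E.symm s).2⟩
  let q : Fin (Fintype.card I) → Set.Iio (B t) :=
    fun s => ⟨B (E.symm s).1, (hlt _).1 (E.symm s).2⟩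
  have hpq : bfT α (Set.Iio (A t)) (Set.Iio (B t)) p q := by
    refine bf_restrict α (OrderEmbedding.subtype _) (OrderEmbedding.subtype _) A B ?_
      (fun s => (E.symm s).1) p q (fun _ => rfl) (fun _ => rfl) h
    intro N e' A' B' hA hB hAB s
    have h1 : A' (e' t) = A t := congrFun hA t
    have h2 : B' (e' t) = B t := congrFun hB t
    have h3 : A' s < A t ↔ B' s < B t := by
      rw [← h1, ← h2, ← not_le, ← not_le, hAB]
    constructor
    · rintro ⟨w, hw⟩
      have : A' s < A t := hw ▸ w.2
      exact ⟨⟨B' s, h3.1 this⟩, rfl⟩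
    · rintro ⟨w, hw⟩
      have : B' s < B t := hw ▸ w.2
      exact ⟨⟨A' s, h3.2 this⟩, rfl⟩
  obtain ⟨f, hf⟩ := iso_of_bf (hα (A t)) p q hpq
  let F : L → L := fun v => if hv : v < A t then (f ⟨v, hv⟩ : L) else B t
  have F1 : ∀ v (hv : v < A t), F v = f ⟨v, hv⟩ := fun v hv => dif_pos hv
  have F2 : F (A t) = B t := dif_neg (lt_irrefl _)
  refine ⟨hle, F, ?_, ?_, ?_⟩
  · intro v hv w hw hvw
    have hv' : v < A t := lt_of_lt_of_le hvw hw
    rw [F1 v hv']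
    rcases lt_or_eq_of_le (show w ≤ A t from hw) with hw' | rfl
    · rw [F1 w hw']
      exact f.strictMono (show (⟨v, hv'⟩ : Set.Iio (A t)) < ⟨w, hw'⟩ from hvw)
    · rw [F2]; exact (f _).2
  · ext w
    constructor
    · rintro ⟨v, hv, rfl⟩
      rcases lt_or_eq_of_le (show v ≤ A t from hv) with hv' | rfl
      · rw [F1 v hv']; exact le_of_lt (f _).2
      · rw [F2]; exact le_refl (B t)
    · intro hw
      rcases lt_or_eq_of_le (show w ≤ B t from hw) with hw' | rfl
      · refine ⟨f.symm ⟨w, hw'⟩, le_of_lt (f.symm ⟨w, hw'⟩).2, ?_⟩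
        rw [F1 _ (f.symm ⟨w, hw'⟩).2]
        simp
      · exact ⟨A t, le_refl (A t), F2⟩
  · intro i
    rcases lt_or_eq_of_le (hle i) with hi | hi
    · have := hf (E ⟨e i, hi⟩)
      simp only [p, q, Equiv.symm_apply_apply] at this
      simp only [Function.comp]
      rw [F1 _ hi, this]
    · have h2 : B (e i) = B t :=
        le_antisymm ((hat _ _).1 hi.le) ((hat _ _).1 hi.ge)
      simp only [Function.comp]
      rw [hi, F2, h2]

/-- gluing along an increasing sequence of cuts -/
theorem glue_cuts {L : Type} [LinearOrder L] (W Z : ℕ → Set L) (g : ℕ → L → L)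
    (hWl : ∀ n, IsLowerSet (W n)) (hZl : ∀ n, IsLowerSet (Z n))
    (hW : ∀ v, ∃ n, v ∈ W n) (hZ : ∀ v, ∃ n, v ∈ Z n)
    (hmono : ∀ n, StrictMonoOn (g n) (W n))
    (hsurj : ∀ n, ∀ w ∈ Z n, ∃ v ∈ W n, g n v = w)
    (hiff : ∀ n, ∀ m ≤ n, ∀ v ∈ W n, (v ∈ W m ↔ g n v ∈ Z m)) :
    ∃ F : L ≃o L, ∀ v ∈ W 0, F v = g 0 v := by
  classical
  let N : L → ℕ := fun v => Nat.find (hW v)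
  have hN : ∀ v, v ∈ W (N v) := fun v => Nat.find_spec (hW v)
  have hN' : ∀ v m, m < N v → v ∉ W m := fun v m h => Nat.find_min (hW v) h
  let F : L → L := fun v => g (N v) v
  have hF : StrictMono F := by
    intro v w hvw
    rcases lt_trichotomy (N v) (N w) with h | h | h
    · have h1 : F v ∈ Z (N v) := (hiff _ _ le_rfl v (hN v)).1 (hN v)
      have h2 : F w ∉ Z (N v) := fun h2 =>
        hN' w _ h ((hiff _ _ h.le w (hN w)).2 h2)
      by_contra h3
      exact h2 (hZl _ (not_lt.1 h3) h1)
    · have h1 : F w = g (N v) w := by simp only [F, h]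
      rw [h1]
      exact hmono _ (hN v) (h ▸ hN w) hvw
    · exact absurd (hWl _ hvw.le (hN w)) (hN' v _ h)
  have hFs : Function.Surjective F := by
    intro w
    have h1 := Nat.find_spec (hZ w)
    obtain ⟨v, hv, hvw⟩ := hsurj _ w h1
    refine ⟨v, ?_⟩
    have : N v = Nat.find (hZ w) := by
      apply le_antisymm
      · exact Nat.find_min' _ hv
      · by_contra h2
        have h3 := hN v
        exact Nat.find_min (hZ w) (not_le.1 h2) (hvw ▸ (hiff _ _ (not_le.1 h2).le v hv).1 h3)
    simp only [F, this, hvw]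
  refine ⟨hF.orderIsoOfSurjective F hFs, fun v hv => ?_⟩
  have : N v = 0 := Nat.le_zero.1 (Nat.find_min' _ hv)
  show F v = _
  simp only [F, this]

/-- the orbit argument (a form of Lindenbaum's lemma) -/
theorem orbit_case {L : Type} [LinearOrder L] {k : ℕ} {a b : Fin k → L} {x y : L} (i0 : Fin k)
    (hmax : ∀ i, a i ≤ a i0) (hab : a i0 ≤ b i0) (hyx : y ≤ x) (h : SegIso a x b y) :
    ∃ F : L ≃o L, ∀ i, F (a i) = b i := by
  classical
  obtain ⟨h0, r, h1, h2, h3⟩ := h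
  have hry : ∀ v ≤ x, r v ≤ y := fun v hv => by
    have : r v ∈ Set.Iic y := h2 ▸ ⟨v, hv, rfl⟩
    exact this
  set c := a i0 with hc
  have hit : ∀ n, r^[n] c ≤ x := by
    intro n
    induction n with
    | zero => exact h0 i0
    | succ n ih => rw [Function.iterate_succ_apply']; exact (hry _ ih).trans hyx
  have hstep : ∀ n, r^[n] c ≤ r^[n+1] c := by
    intro n
    induction n with
    | zero => simpa [h3, hc] using hab
    | succ n ih =>
      rw [Function.iterate_succ_apply', Function.iterate_succ_apply' (n := n + 1)]
      exact (h1.le_iff_le (hit _) (hit _)).2 ih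
  let W : Set L := {v | ∃ n, v ≤ r^[n] c}
  have hWx : ∀ v ∈ W, v ≤ x := fun v ⟨n, hn⟩ => hn.trans (hit n)
  have hWr : ∀ v ∈ W, r v ∈ W := by
    rintro v ⟨n, hn⟩
    refine ⟨n + 1, ?_⟩
    rw [Function.iterate_succ_apply']
    exact (h1.le_iff_le (hn.trans (hit n)) (hit _)).2 hn
  have hWs : ∀ w ∈ W, ∃ v ∈ W, r v = w := by
    rintro w ⟨n, hn⟩
    have hn' := hn.trans (hstep n)
    rw [Function.iterate_succ_apply'] at hn'
    have : w ∈ r '' Set.Iic x := h2 ▸ (hn'.trans (hry _ (hit n)))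
    obtain ⟨v, hv, rfl⟩ := this
    exact ⟨v, ⟨n, (h1.le_iff_le hv (hit n)).1 hn'⟩, rfl⟩
  have hWl : ∀ v w, v ≤ w → w ∈ W → v ∈ W := fun v w hvw ⟨n, hn⟩ => ⟨n, hvw.trans hn⟩
  let F : L → L := fun v => if v ∈ W then r v else v
  have F1 : ∀ v ∈ W, F v = r v := fun v hv => if_pos hv
  have F2 : ∀ v ∉ W, F v = v := fun v hv => if_neg hv
  have hF : StrictMono F := by
    intro v w hvw
    by_cases hw : w ∈ W
    · have hv := hWl v w hvw.le hw
      rw [F1 v hv, F1 w hw]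
      exact h1 (hWx v hv) (hWx w hw) hvw
    · rw [F2 w hw]
      by_cases hv : v ∈ W
      · rw [F1 v hv]
        by_contra h
        exact hw (hWl _ _ (not_lt.1 h) (hWr v hv))
      · rw [F2 v hv]; exact hvw
  have hFs : Function.Surjective F := by
    intro w
    by_cases hw : w ∈ W
    · obtain ⟨v, hv, h⟩ := hWs w hw
      exact ⟨v, by rw [F1 v hv, h]⟩
    · exact ⟨w, F2 w hw⟩
  refine ⟨hF.orderIsoOfSurjective F hFs, fun i => ?_⟩
  show F (a i) = b i
  rw [F1 _ ⟨0, hmax i⟩, h3]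

theorem main_aux {L : Type} [LinearOrder L] [Countable L] {α : Ordinal.{u}}
    (hα : ∀ x : L, scottRank.{u} ↥(Set.Iio x) < α) {k : ℕ} {a b : Fin k → L} (i0 : Fin k)
    (hmax : ∀ i, a i ≤ a i0) (hle : a i0 ≤ b i0)
    (hab : bfT (α + 2) L L a b) (hba : bfT (α + 2) L L b a) :
    ∃ F : L ≃o L, ∀ i, F (a i) = b i := by
  have hat := bf_atom hab
  have hmaxb : ∀ i, b i ≤ b i0 := fun i => (hat _ _).1 (hmax i)
  have l1 : α + 1 < α + 2 := by
    have : (1 : Ordinal) < 2 := one_lt_two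
    exact (add_lt_add_iff_left α).2 this
  have l0 : α < α + 1 := Order.lt_add_one_iff.2 le_rfl
  -- the upper step
  have E1 : ∀ u, (∀ i, a i ≤ u) → ∃ u', SegIso a u b u' ∧
      ∀ x, ∀ v, SegIso a x b v → u' ≤ v → ∃ v2, SegIso a x a v2 ∧ u ≤ v2 := by
    intro u hu
    obtain ⟨c, hc⟩ := bf_ext l1 hba (fun _ : Fin 1 => u)
    have hatc := bf_atom hc
    refine ⟨c 0, ?_, ?_⟩
    · have := seg_of_bf hα _ _ (bf_mono l0.le hc) (Fin.castAdd 1) (Fin.natAdd k 0)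
        (by intro i; rw [Fin.append_left, Fin.append_right]; exact hu i)
      rw [Fin.append_right, Fin.append_right] at this
      convert this using 1 <;> ext i <;> simp
    · intro x v hv huv
      obtain ⟨d, hd⟩ := bf_ext l0 hc (fun _ : Fin 1 => v)
      have hatd := bf_atom hd
      refine ⟨d 0, hv.trans ?_, ?_⟩
      · have := seg_of_bf hα _ _ hd (fun i => Fin.castAdd 1 (Fin.castAdd 1 i)) (Fin.natAdd (k+1) 0)
          (by
            intro i
            rw [Fin.append_left, Fin.append_right, Fin.append_left]; exact hv.right i)
        rw [Fin.append_right, Fin.append_right] at this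
        convert this using 1 <;> ext i <;> simp
      · have := (hatd (Fin.castAdd 1 (Fin.natAdd k 0)) (Fin.natAdd (k+1) 0)).1
        simp only [Fin.append_left, Fin.append_right] at this
        exact this huv
  have E2 : ∀ y, (∀ i, b i ≤ y) → ∃ x, SegIso a x b y := by
    intro u hu
    obtain ⟨c, hc⟩ := bf_ext l1 hab (fun _ : Fin 1 => u)
    refine ⟨c 0, SegIso.symm ?_⟩
    have := seg_of_bf hα _ _ (bf_mono l0.le hc) (Fin.castAdd 1) (Fin.natAdd k 0)
      (by intro i; rw [Fin.append_left, Fin.append_right]; exact hu i)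
    rw [Fin.append_right, Fin.append_right] at this
    convert this using 1 <;> ext i <;> simp
  by_cases hcase : ∃ x, (∀ i, a i ≤ x) ∧ ∀ u, ∃ v, SegIso a x a v ∧ u ≤ v
  · obtain ⟨x, hx, hunb⟩ := hcase
    obtain ⟨y, hy, -⟩ := E1 x hx
    obtain ⟨v, hv, hyv⟩ := hunb y
    exact orbit_case i0 hmax hle hyv (hv.symm.trans hy)
  push Not at hcase
  have : Nonempty L := ⟨a i0⟩
  obtain ⟨en, hen⟩ := exists_surjective_nat L
  choose! ub hub using hcase
  -- the cofinal sequence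
  let X : ℕ → L := fun n => Nat.rec (a i0) (fun n x => max (max x (en n)) (ub x)) n
  have X0 : X 0 = a i0 := rfl
  have XS : ∀ n, X (n + 1) = max (max (X n) (en n)) (ub (X n)) := fun n => rfl
  have Xmono : Monotone X := monotone_nat_of_le_succ fun n => by
    rw [XS]; exact (le_max_left _ _).trans (le_max_left _ _)
  have Xa : ∀ n i, a i ≤ X n := fun n i => (hmax i).trans (Xmono (Nat.zero_le n))
  have Xcof : ∀ v, ∃ n, v ≤ X n := fun v => by
    obtain ⟨n, rfl⟩ := hen v
    exact ⟨n + 1, by rw [XS]; exact (le_max_right _ _).trans (le_max_left _ _)⟩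
  have XC : ∀ n v, SegIso a (X n) a v → v < X (n + 1) := fun n v hv =>
    lt_of_lt_of_le (hub _ (Xa n) v hv) (by rw [XS]; exact le_max_right _ _)
  choose Y hY hYD using fun n => E1 (X (n + 1)) (Xa (n + 1))
  have hYD' : ∀ n x, (∀ v, SegIso a x a v → v < X (n + 1)) → ∀ v, SegIso a x b v → v < Y n := by
    intro n x h v hv
    by_contra h'
    obtain ⟨v2, h1, h2⟩ := hYD n x v hv (not_lt.1 h')
    exact absurd (h v2 h1) (not_lt.2 h2)
  choose g gmono gim ga using fun n => (hY n).2
  let W : ℕ → Set L := fun n => {v | ∃ w, SegIso a (X n) a w ∧ v ≤ w}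
  let Z : ℕ → Set L := fun n => {v | ∃ w, SegIso a (X n) b w ∧ v ≤ w}
  have XC' : ∀ m n, m ≤ n → ∀ v, SegIso a (X m) a v → v < X (n + 1) := fun m n h v hv =>
    lt_of_lt_of_le (XC m v hv) (Xmono (Nat.succ_le_succ h))
  have hWX : ∀ n, ∀ v ∈ W n, v ≤ X (n + 1) := fun n v ⟨w, h1, h2⟩ => h2.trans (XC n w h1).le
  have hpre : ∀ n w, w ≤ Y n → ∃ v ≤ X (n + 1), g n v = w := fun n w hw => by
    have : w ∈ g n '' Set.Iic (X (n + 1)) := gim n ▸ hw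
    exact this
  -- `g n` matches the classes
  have hiff0 : ∀ n, ∀ m ≤ n, ∀ v ≤ X (n + 1), (v ∈ W m ↔ g n v ∈ Z m) := by
    intro n m hmn v hv
    constructor
    · rintro ⟨w, h1, h2⟩
      have hw := (XC' m n hmn w h1).le
      exact ⟨g n w, h1.trans (seg_restrict (gmono n) (gim n) (ga n) hw h1.right),
        ((gmono n).le_iff_le hv hw).2 h2⟩
    · rintro ⟨w, h1, h2⟩
      have hw := (hYD' n (X m) (XC' m n hmn) w h1).le
      obtain ⟨t, ht, rfl⟩ := hpre n w hw
      have hat' : ∀ i, a i ≤ t := fun i => by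
        have := h1.right i
        rw [← ga n i] at this
        exact ((gmono n).le_iff_le (Xa (n + 1) i) ht).1 this
      exact ⟨t, h1.trans (seg_restrict (gmono n) (gim n) (ga n) ht hat').symm,
        ((gmono n).le_iff_le hv ht).1 h2⟩
  obtain ⟨F, hF⟩ := glue_cuts W Z g
    (fun n v w hvw ⟨t, h1, h2⟩ => ⟨t, h1, hvw.trans h2⟩)
    (fun n v w hvw ⟨t, h1, h2⟩ => ⟨t, h1, hvw.trans h2⟩)
    (fun v => by
      obtain ⟨n, hn⟩ := Xcof v
      exact ⟨n, X n, SegIso.refl (Xa n), hn⟩)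
    (fun w => by
      obtain ⟨x, hx⟩ := E2 (max w (b i0)) (fun i => (hmaxb i).trans (le_max_right _ _))
      obtain ⟨n, hn⟩ := Xcof (ub x)
      have := hYD' n x (fun v hv => lt_of_lt_of_le (hub x hx.1 v hv)
        (hn.trans (Xmono (Nat.le_succ n)))) _ hx
      exact ⟨n + 1, Y n, hY n, (le_max_left _ _).trans this.le⟩)
    (fun n => (gmono n).mono (fun v hv => hWX n v hv))
    (fun n w hw => by
      obtain ⟨t, h1, h2⟩ := hw
      obtain ⟨v, hv, hvw⟩ := hpre n w (h2.trans (hYD' n (X n) (XC' n n le_rfl) t h1).le)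
      exact ⟨v, (hiff0 n n le_rfl v hv).2 (hvw ▸ ⟨t, h1, h2⟩), hvw⟩)
    (fun n m hmn v hv => hiff0 n m hmn v (hWX n v hv))
  refine ⟨F, fun i => ?_⟩
  rw [hF (a i) ⟨X 0, SegIso.refl (Xa 0), Xa 0 i⟩, ga]

/-- If every proper initial segment `L_{<x}` of a countable linear order `L` has Scott
rank `< α`, then `SR L ≤ α + 4`. -/
theorem scottRank_of_initialSegments (L : Type) [LinearOrder L] [Countable L]
    (α : Ordinal) (h : ∀ x : L, scottRank ↥(Set.Iio x) < α) :
    scottRank L ≤ α + 4 := by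
  refine csInf_le' ?_
  intro k a
  have l3 : α + 3 < α + 4 := by
    have : (3 : Ordinal) < 4 := by norm_num
    exact (add_lt_add_iff_left α).2 this
  have l2 : α + 2 < α + 3 := by
    have : (2 : Ordinal) < 3 := by norm_num
    exact (add_lt_add_iff_left α).2 this
  refine lt_of_le_of_lt (csInf_le' ?_) l3
  intro b hb
  have hab := bf_mono l2.le hb
  have hba := bf_symm l2 hb
  rcases Nat.eq_zero_or_pos k with rfl | hk
  · exact ⟨OrderIso.refl L, fun i => i.elim0⟩
  have : Nonempty (Fin k) := ⟨⟨0, hk⟩⟩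
  obtain ⟨i0, hi0⟩ := Finite.exists_max a
  rcases le_total (a i0) (b i0) with hle | hle
  · exact main_aux h i0 hi0 hle hab hba
  · obtain ⟨F, hF⟩ := main_aux h i0 (fun i => (bf_atom hab _ _).1 (hi0 i)) hle hba hab
    exact ⟨F.symm, fun i => by rw [← hF i, OrderIso.symm_apply_apply]⟩
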